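/- Assume ℓ(C) = 2 with f_1 = x and f_2 = y (so e_1 = e_2 = 1 and e_j ≥ 2 for j ≥ 3). Then the S-module D₀(f) is generated by the set G = {ρ_1, ..., ρ_{m−1}, σ^z}, and G is a minimal generating set: no element of G lies in the S-submodule of S³ generated by the other m−1 elements of G. In particular C is an m-syzygy curve with exponents d_1 = ⋯ = d_{m−1} = d−2 and d_m = d−1. -/

import Mathlib

open MvPolynomial

noncomputable abbrev S : Type := MvPolynomial (Fin 3) ℂ

/-- The gradient `∇g = (g_x, g_y, g_z)` of a polynomial `g ∈ S = ℂ[x,y,z]`. -/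
noncomputable def grad (g : S) : Fin 3 → S := fun t => pderiv t g

/-- The syzygy triple `ρ_j = Σ_{i≠j} (∏_{k≠i,j} f_k) (∇f_i × ∇f_j)`
of the 2-form `ω_j = df ∧ df_j/f_j`. -/
noncomputable def rho {m : ℕ} (F : Fin m → S) (j : Fin m) : Fin 3 → S :=
  ∑ i ∈ Finset.univ.erase j,
    (∏ k ∈ (Finset.univ.erase j).erase i, F k) • crossProduct (grad (F i)) (grad (F j))

/-- The Jacobian syzygy module `D₀(f) = {(a,b,c) ∈ S³ : a f_x + b f_y + c f_z = 0}`. -/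
noncomputable def D0 (f : S) : Submodule S (Fin 3 → S) where
  carrier := {v | ∑ t, v t * pderiv t f = 0}
  add_mem' {a b} ha hb := by
    simp only [Set.mem_setOf_eq, Pi.add_apply, add_mul, Finset.sum_add_distrib] at *
    rw [ha, hb, add_zero]
  zero_mem' := by simp
  smul_mem' c v hv := by
    simp only [Set.mem_setOf_eq, Pi.smul_apply, smul_eq_mul, mul_assoc, ← Finset.mul_sum] at *
    rw [hv, mul_zero]

/-- The syzygy triple `σ^x = (0, f_z, −f_y)` of the 2-form `df ∧ dx`. -/
noncomputable def sigx (f : S) : Fin 3 → S := ![0, pderiv 2 f, -pderiv 1 f]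
/-- The syzygy triple `σ^y = (−f_z, 0, f_x)` of the 2-form `df ∧ dy`. -/
noncomputable def sigy (f : S) : Fin 3 → S := ![-pderiv 2 f, 0, pderiv 0 f]
/-- The syzygy triple `σ^z = (f_y, −f_x, 0)` of the 2-form `df ∧ dz`. -/
noncomputable def sigz (f : S) : Fin 3 → S := ![pderiv 1 f, -pderiv 0 f, 0]

/-- The candidate generating set `G = {ρ_1, …, ρ_{m−1}, σ^z}` (case `ℓ(C) = 2`). -/
noncomputable def G2 {m : ℕ} (F : Fin m → S) : (Fin (m - 1) ⊕ Fin 1) → (Fin 3 → S) :=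
  Sum.elim (fun j => rho F (Fin.castLE (Nat.sub_le m 1) j)) ![sigz (∏ i, F i)]

/-!
For `v ∈ D₀(f)` put `θ = v × (x, y, z)`. Modulo `f_j` the vector `θ` is a multiple `c_j ∇f_j`, so
`θ / f` has at most a logarithmic pole along `C_j`. Comparing the two expressions for `θ` at the
transversal intersection of `C_i` and `C_j` puts `c_j` in the ideal `(f_i, f_j)`, and as no three
curves meet, `c_j` lies in `(f_j, f / f_j)`. Hence `θ = f (β + ∑ g_j df_j / f_j)` with polynomial
`g_j` and `β`. The cross product with `∇f` and Euler's formula give `d v = ∑ g_j ρ_j + ∇f × β`,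
where `d = deg f`. When `f_1 = x` and `f_2 = y`, the triples `σ^x` and `σ^y` are multiples of `ρ_1`
and `ρ_2`, while `∑ ρ_j = 0` makes `ρ_m` superfluous.

Conversely, a relation `∑ g_j ρ_j + ∇f × β = 0` makes `f (β + ∑ g_j df_j / f_j)` a multiple
`K ∇f`, hence `g_j = K + f_j u_j` and `β = -∑ u_j ∇f_j` for some `u_j`. If `g_m = 0`, then every
`g_j` vanishes at the origin, and so does the last entry of `β`, since no `f_j` has a linear term
in `z`. That all relations have coefficients vanishing at the origin is what minimality needs.

The divisions rest on exactness of Koszul complexes. Polynomials without a common zero off the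
origin generate an ideal containing `x^N`, `y^N` and `z^N` for some `N`, and exactness is proved by
descent along this explicit regular sequence.
-/

section Descent

variable {R M ι : Type*} [CommRing R] [DecompositionMonoid R] {x y z : R}

theorem exists_eq_smul_of_isRelPrime_smul_eq_smul (hxy : IsRelPrime x y) {u v : ι → R}
    (h : y • u = x • v) : ∃ n, u = x • n := by
  have hdvd (i : ι) : x ∣ u i :=
    hxy.dvd_of_dvd_mul_left ⟨v i, congrFun h i⟩
  choose n hn using hdvd
  exact ⟨n, funext hn⟩

variable [IsDomain R] [AddCommGroup M] [Module R M] [Module.IsTorsionFree R M]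

theorem mem_span_singleton_of_isRelPrime_smul_mem (hxy : IsRelPrime x y) (hx : x ≠ 0) {w m : M}
    (hxm : x • m ∈ Submodule.span R {w}) (hym : y • m ∈ Submodule.span R {w}) :
    m ∈ Submodule.span R {w} := by
  obtain ⟨a, ha⟩ := Submodule.mem_span_singleton.1 hxm
  obtain ⟨b, hb⟩ := Submodule.mem_span_singleton.1 hym
  rcases eq_or_ne w 0 with rfl | hw
  · have : x • m = 0 := by rw [← ha, smul_zero]
    simp [(smul_eq_zero.1 this).resolve_left hx]
  · have hab : a * y = x * b := by
      refine smul_left_injective R hw ?_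
      simp only [mul_smul, hb, mul_comm a, ha, smul_comm x y]
    obtain ⟨c, rfl⟩ := hxy.dvd_of_dvd_mul_right ⟨b, hab⟩
    refine Submodule.mem_span_singleton.2 ⟨c, smul_right_injective M hx ?_⟩
    simpa only [mul_smul] using ha

theorem mem_range_of_isRelPrime_smul_mem (hxy : IsRelPrime x y) (hx : x ≠ 0)
    (hz : ∀ r, r * z ∈ Ideal.span {x, y} → r ∈ Ideal.span {x, y})
    {d : (ι → R) →ₗ[R] M} {w : ι → R} (hw : w ≠ 0) (hd : LinearMap.ker d = Submodule.span R {w})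
    {b : M} (hxb : x • b ∈ LinearMap.range d) (hyb : y • b ∈ LinearMap.range d)
    (hzb : z • b ∈ LinearMap.range d) : b ∈ LinearMap.range d := by
  obtain ⟨u, hu⟩ := hxb
  obtain ⟨v, hv⟩ := hyb
  obtain ⟨t, ht⟩ := hzb
  have hdw : d w = 0 := by
    rw [← LinearMap.mem_ker, hd]; exact Submodule.mem_span_singleton_self w
  have exists_smul {n : ι → R} (hn : d n = 0) : ∃ c : R, c • w = n :=
    Submodule.mem_span_singleton.1 (hd ▸ LinearMap.mem_ker.2 hn)
  obtain ⟨p, hp⟩ := exists_smul (n := y • u - x • v) (by simp [hu, hv, smul_comm x y])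
  obtain ⟨q, hq⟩ := exists_smul (n := z • u - x • t) (by simp [hu, ht, smul_comm x z])
  obtain ⟨r, hr⟩ := exists_smul (n := z • v - y • t) (by simp [hv, ht, smul_comm y z])
  have hcocycle : z * p - y * q + x * r = 0 := by
    refine (smul_eq_zero.1 (?_ : (z * p - y * q + x * r) • w = 0)).resolve_right hw
    rw [add_smul, sub_smul, mul_smul, mul_smul, mul_smul, hp, hq, hr]
    module
  obtain ⟨α, β, hαβ⟩ := Ideal.mem_span_pair.1 <|
    hz p (Ideal.mem_span_pair.2 ⟨-r, q, by linear_combination -hcocycle⟩)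
  obtain ⟨n, hn⟩ := exists_eq_smul_of_isRelPrime_smul_eq_smul hxy
    (show y • (u - β • w) = x • (v + α • w) by
      rw [← sub_eq_zero]
      calc _ = (y • u - x • v) - (α * x + β * y) • w := by module
        _ = 0 := by rw [hαβ, hp, sub_self])
  refine ⟨n, smul_right_injective M hx ?_⟩
  change x • d n = x • b
  rw [← map_smul, ← hn, map_sub, map_smul d β, hdw, smul_zero, sub_zero, hu]

theorem ker_linearCombination_pair {a b : R} (hab : IsRelPrime a b) (ha : a ≠ 0) :
    LinearMap.ker (Fintype.linearCombination R ![a, b]) = Submodule.span R {![b, -a]} := by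
  ext p
  simp only [LinearMap.mem_ker, Fintype.linearCombination_apply, Fin.sum_univ_two,
    Submodule.mem_span_singleton, smul_eq_mul, Matrix.cons_val_zero, Matrix.cons_val_one]
  constructor
  · intro hp
    have hdvd : a ∣ p 1 * b := ⟨-p 0, by linear_combination hp⟩
    obtain ⟨q, hq⟩ := hab.dvd_of_dvd_mul_right hdvd
    refine ⟨-q, funext <| Fin.forall_fin_two.2 ⟨mul_right_cancel₀ ha ?_, ?_⟩⟩
    · simp only [Pi.smul_apply, Matrix.cons_val_zero, smul_eq_mul]
      linear_combination -hp + b * hq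
    · simp [hq, mul_comm]
  · rintro ⟨q, rfl⟩
    simp only [Pi.smul_apply, Matrix.cons_val_zero, Matrix.cons_val_one, smul_eq_mul]
    ring

end Descent

section Nullstellensatz

variable {σ k M : Type*} [Field k] [AddCommGroup M] [Module (MvPolynomial σ k) M]

/-- The polynomials in `s` have no common zero in affine space, except possibly the origin. -/
def NoZeroOffOrigin (s : Set (MvPolynomial σ k)) : Prop :=
  ∀ p : σ → k, (∀ g ∈ s, eval p g = 0) → p = 0

variable {s : Set (MvPolynomial σ k)}

theorem X_pow_isRelPrime_X_pow {i j : σ} (hij : i ≠ j) (N : ℕ) :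
    IsRelPrime (X i ^ N : MvPolynomial σ k) (X j ^ N) := by
  refine IsRelPrime.pow ?_
  rw [X_prime.irreducible.isRelPrime_iff_not_dvd, X_dvd_X]
  simpa using hij

theorem mem_span_X_pow_pair_of_mul_X_pow_mem {i j l : σ} (hil : i ≠ l) (hjl : j ≠ l) {N : ℕ}
    {r : MvPolynomial σ k} (h : r * X l ^ N ∈ Ideal.span {X i ^ N, X j ^ N}) :
    r ∈ Ideal.span {X i ^ N, X j ^ N} := by
  have hpair : ({X i ^ N, X j ^ N} : Set (MvPolynomial σ k)) =
      (fun d => monomial d 1) '' {Finsupp.single i N, Finsupp.single j N} := by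
    rw [Set.image_pair, X_pow_eq_monomial, X_pow_eq_monomial]
  rw [hpair, mem_ideal_span_monomial_image] at h ⊢
  intro d hd
  obtain ⟨c, hc, hle⟩ := h (d + Finsupp.single l N) (by
    rwa [mem_support_iff, X_pow_eq_monomial, coeff_mul_monomial, mul_one, ← mem_support_iff])
  refine ⟨c, hc, ?_⟩
  rcases hc with rfl | rfl <;> simpa [Finsupp.single_le_iff, hil, hjl] using hle

variable [IsAlgClosed k] [Finite σ]

theorem NoZeroOffOrigin.exists_X_pow_mem_span (hs : NoZeroOffOrigin s) :
    ∃ N : ℕ, ∀ t, X t ^ N ∈ Ideal.span s := by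
  cases nonempty_fintype σ
  have hX (t : σ) : X t ∈ (Ideal.span s).radical := by
    rw [← vanishingIdeal_zeroLocus_eq_radical (K := k), mem_vanishingIdeal_iff]
    intro p hp
    rw [zeroLocus_span] at hp
    simp [hs p fun g hg => by simpa [aeval_eq_eval] using hp g hg]
  choose n hn using hX
  exact ⟨∑ t, n t, fun t => Ideal.mem_of_dvd _
    (pow_dvd_pow _ (Finset.single_le_sum_of_canonicallyOrdered (Finset.mem_univ t))) (hn t)⟩

theorem NoZeroOffOrigin.exists_X_pow_smul_mem (hs : NoZeroOffOrigin s)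
    {P : Submodule (MvPolynomial σ k) M} {b : M} (hb : ∀ g ∈ s, g • b ∈ P) :
    ∃ N : ℕ, ∀ t, (X t ^ N : MvPolynomial σ k) • b ∈ P := by
  obtain ⟨N, hN⟩ := hs.exists_X_pow_mem_span
  have hle : Ideal.span s ≤ P.comap (LinearMap.toSpanSingleton _ M b) := Ideal.span_le.2 hb
  exact ⟨N, fun t => hle (hN t)⟩

variable [Module.IsTorsionFree (MvPolynomial σ k) M]

theorem NoZeroOffOrigin.mem_span_singleton [Nontrivial σ] (hs : NoZeroOffOrigin s) {w b : M}
    (hb : ∀ g ∈ s, g • b ∈ Submodule.span (MvPolynomial σ k) {w}) :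
    b ∈ Submodule.span (MvPolynomial σ k) {w} := by
  obtain ⟨N, hN⟩ := hs.exists_X_pow_smul_mem hb
  obtain ⟨i, j, hij⟩ := exists_pair_ne σ
  exact mem_span_singleton_of_isRelPrime_smul_mem (X_pow_isRelPrime_X_pow hij N)
    (pow_ne_zero N (X_ne_zero i)) (hN i) (hN j)

theorem NoZeroOffOrigin.mem_range {ι : Type*} (hσ : 2 < Nat.card σ)
    (hs : NoZeroOffOrigin s) {d : (ι → MvPolynomial σ k) →ₗ[MvPolynomial σ k] M}
    {w : ι → MvPolynomial σ k} (hw : w ≠ 0) (hd : LinearMap.ker d = Submodule.span _ {w})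
    {b : M} (hb : ∀ g ∈ s, g • b ∈ LinearMap.range d) : b ∈ LinearMap.range d := by
  obtain ⟨N, hN⟩ := hs.exists_X_pow_smul_mem hb
  cases nonempty_fintype σ
  rw [Nat.card_eq_fintype_card] at hσ
  obtain ⟨i, j, l, hij, hil, hjl⟩ := Fintype.two_lt_card_iff.1 hσ
  exact mem_range_of_isRelPrime_smul_mem (X_pow_isRelPrime_X_pow hij N)
    (pow_ne_zero N (X_ne_zero i)) (fun _ => mem_span_X_pow_pair_of_mul_X_pow_mem hil hjl)
    hw hd (hN i) (hN j) (hN l)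

theorem NoZeroOffOrigin.dvd_of_forall_dvd_mul [Nontrivial σ] (hs : NoZeroOffOrigin s)
    {a g : MvPolynomial σ k} (h : ∀ q ∈ s, g ∣ a * q) : g ∣ a := by
  rw [← Ideal.mem_span_singleton]
  refine hs.mem_span_singleton fun q hq => Ideal.mem_span_singleton.2 ?_
  rw [smul_eq_mul, mul_comm]
  exact h q hq

theorem NoZeroOffOrigin.mem_span_pair (hσ : 2 < Nat.card σ)
    (hs : NoZeroOffOrigin s) {a b c : MvPolynomial σ k} (hab : IsRelPrime a b) (ha : a ≠ 0)
    (h : ∀ g ∈ s, c * g ∈ Ideal.span {a, b}) : c ∈ Ideal.span {a, b} := by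
  have hrange : LinearMap.range (Fintype.linearCombination (MvPolynomial σ k) ![a, b]) =
      Ideal.span {a, b} := by
    rw [Fintype.range_linearCombination, Matrix.range_cons_cons_empty, Ideal.span]
  rw [← hrange]
  refine hs.mem_range hσ (w := ![b, -a]) (fun hw => ha ?_)
    (ker_linearCombination_pair hab ha) fun g hg => ?_
  · simpa using congrFun hw 1
  · rw [hrange, smul_eq_mul, mul_comm]
    exact h g hg

theorem NoZeroOffOrigin.isUnit [Nontrivial σ] {g : MvPolynomial σ k}
    (hg : NoZeroOffOrigin {g}) : IsUnit g :=
  isUnit_of_dvd_one (hg.dvd_of_forall_dvd_mul (by simp))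

end Nullstellensatz

section Cross

open Matrix

theorem smul_eq_smul_of_cross_eq_zero {R : Type*} [CommRing R] {a b : Fin 3 → R}
    (h : a ⨯₃ b = 0) (t : Fin 3) : b t • a = a t • b := by
  have := cross_cross_eq_smul_sub_smul' (Pi.single t 1) a b
  rw [h, map_zero, single_one_dotProduct, dotProduct_single_one] at this
  exact sub_eq_zero.1 this.symm

variable {σ k : Type*} [Field k] {v : Fin 3 → MvPolynomial σ k}

theorem NoZeroOffOrigin.ne_zero [Nonempty σ] (hv : NoZeroOffOrigin (Set.range v)) : v ≠ 0 := by
  rintro rfl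
  exact one_ne_zero (hv 1 (by simp))

variable [IsAlgClosed k] [Finite σ]

theorem NoZeroOffOrigin.exists_eq_smul_of_cross_eq_zero [Nontrivial σ]
    (hv : NoZeroOffOrigin (Set.range v)) {α : Fin 3 → MvPolynomial σ k} (h : α ⨯₃ v = 0) :
    ∃ c : MvPolynomial σ k, α = c • v := by
  obtain ⟨c, hc⟩ := Submodule.mem_span_singleton.1 <| hv.mem_span_singleton (w := v) (b := α) <|
    Set.forall_mem_range.2 fun t => Submodule.mem_span_singleton.2
      ⟨α t, (smul_eq_smul_of_cross_eq_zero h t).symm⟩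
  exact ⟨c, hc.symm⟩

theorem NoZeroOffOrigin.exists_eq_cross_of_dotProduct_eq_zero (hσ : 2 < Nat.card σ)
    (hv : NoZeroOffOrigin (Set.range v)) {β : Fin 3 → MvPolynomial σ k} (h : β ⬝ᵥ v = 0) :
    ∃ γ, β = γ ⨯₃ v := by
  have : Nontrivial σ := Finite.one_lt_card_iff_nontrivial.1 (by lia)
  let d : (Fin 3 → MvPolynomial σ k) →ₗ[MvPolynomial σ k] _ := crossProduct.flip v
  have hd (α) : d α = α ⨯₃ v := LinearMap.flip_apply ..
  have hker : LinearMap.ker d = Submodule.span _ {v} := by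
    ext α
    rw [LinearMap.mem_ker, hd, Submodule.mem_span_singleton]
    constructor
    · intro hα
      obtain ⟨c, hc⟩ := hv.exists_eq_smul_of_cross_eq_zero hα
      exact ⟨c, hc.symm⟩
    · rintro ⟨c, rfl⟩
      rw [LinearMap.map_smul₂, cross_self, smul_zero]
  obtain ⟨γ, hγ⟩ := hv.mem_range hσ (d := d) hv.ne_zero hker (b := β) <|
    Set.forall_mem_range.2 fun t => ⟨Pi.single t 1 ⨯₃ β, by
      rw [hd, cross_cross_eq_smul_sub_smul, h, single_one_dotProduct,
        zero_smul, sub_zero]⟩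
  exact ⟨γ, hγ.symm⟩

theorem NoZeroOffOrigin.exists_eq_smul_add_smul_of_cross_eq_smul (hσ : 2 < Nat.card σ)
    (hv : NoZeroOffOrigin (Set.range v)) {g : MvPolynomial σ k} (hg : g ≠ 0)
    {α β : Fin 3 → MvPolynomial σ k} (h : α ⨯₃ v = g • β) :
    ∃ (c : MvPolynomial σ k) (γ : Fin 3 → MvPolynomial σ k), α = c • v + g • γ := by
  have : Nontrivial σ := Finite.one_lt_card_iff_nontrivial.1 (by lia)
  have hβ : β ⬝ᵥ v = 0 := by
    refine (smul_eq_zero.1 ?_).resolve_left hg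
    rw [← smul_dotProduct, ← h, dotProduct_comm, dot_cross_self]
  obtain ⟨γ, rfl⟩ := hv.exists_eq_cross_of_dotProduct_eq_zero hσ hβ
  obtain ⟨c, hc⟩ := hv.exists_eq_smul_of_cross_eq_zero (α := α - g • γ) <| by
    rw [LinearMap.map_sub₂, LinearMap.map_smul₂, h, sub_self]
  exact ⟨c, γ, sub_eq_iff_eq_add.1 hc⟩

end Cross

section Prod

variable {R ι κ : Type*} [CommRing R]

theorem mem_of_mul_prod_mem {I : Ideal R} {F : ι → R} {s : Finset ι}
    (hF : ∀ i ∈ s, ∀ w, w * F i ∈ I → w ∈ I) {w : R} (hw : w * ∏ i ∈ s, F i ∈ I) : w ∈ I := by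
  classical
  induction s using Finset.induction_on generalizing w with
  | empty => simpa using hw
  | insert i s hi ih =>
    rw [Finset.prod_insert hi, ← mul_assoc] at hw
    exact hF i (Finset.mem_insert_self i s) w
      (ih (fun j hj => hF j (Finset.mem_insert_of_mem hj)) hw)

theorem mem_span_pair_prod {a c : R} {F : ι → R} {s : Finset ι}
    (hF : ∀ i ∈ s, ∀ j ∈ s, i ≠ j → ∀ w, w * F j ∈ Ideal.span {a, F i} → w ∈ Ideal.span {a, F i})
    (hc : ∀ i ∈ s, c ∈ Ideal.span {a, F i}) : c ∈ Ideal.span {a, ∏ i ∈ s, F i} := by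
  classical
  induction s using Finset.induction_on with
  | empty =>
    rw [Finset.prod_empty]
    exact Ideal.mem_span_pair.2 ⟨0, c, by ring⟩
  | insert i s hi ih =>
    obtain ⟨u, w, huw⟩ := Ideal.mem_span_pair.1 <|
      ih (fun j hj l hl => hF j (Finset.mem_insert_of_mem hj) l (Finset.mem_insert_of_mem hl))
        fun j hj => hc j (Finset.mem_insert_of_mem hj)
    obtain ⟨p, q, hpq⟩ := Ideal.mem_span_pair.1 (hc i (Finset.mem_insert_self i s))
    have hw : w ∈ Ideal.span {a, F i} := by
      refine mem_of_mul_prod_mem (s := s) (fun j hj => hF i (Finset.mem_insert_self i s) j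
        (Finset.mem_insert_of_mem hj) (ne_of_mem_of_not_mem hj hi).symm) ?_
      exact Ideal.mem_span_pair.2 ⟨p - u, q, by linear_combination hpq - huw⟩
    obtain ⟨p', q', hw'⟩ := Ideal.mem_span_pair.1 hw
    rw [Finset.prod_insert hi]
    exact Ideal.mem_span_pair.2 ⟨u + p' * ∏ j ∈ s, F j, q', by
      linear_combination huw + (∏ j ∈ s, F j) * hw'⟩

variable [DecidableEq ι] [Fintype ι]

/-- The product of all members of a finite family except the `j`-th, written `f/f_j` on paper,
where `f` is the product of the family. -/
def prodErase (F : ι → R) (j : ι) : R := ∏ i ∈ Finset.univ.erase j, F i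

theorem mul_prodErase (F : ι → R) (j : ι) : F j * prodErase F j = ∏ i, F i :=
  Finset.mul_prod_erase _ _ (Finset.mem_univ j)

theorem dvd_prodErase (F : ι → R) {i j : ι} (hij : i ≠ j) : F i ∣ prodErase F j :=
  Finset.dvd_prod_of_mem F (Finset.mem_erase.2 ⟨hij, Finset.mem_univ i⟩)

theorem dvd_sum_prodErase_smul_sub (F : ι → R) (g : ι → R) (w : ι → κ → R) (j : ι) (t : κ) :
    F j ∣ (∑ i, (g i * prodErase F i) • w i - (g j * prodErase F j) • w j) t := by
  rw [← Finset.sum_erase_eq_sub (Finset.mem_univ j), Finset.sum_apply]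
  exact Finset.dvd_sum fun i hi =>
    ((dvd_prodErase F (Finset.ne_of_mem_erase hi).symm).mul_left _).mul_right _

variable [DecompositionMonoid R] {F : ι → R}

theorem isRelPrime_prodErase (hF : Pairwise fun i j => IsRelPrime (F i) (F j)) (j : ι) :
    IsRelPrime (F j) (prodErase F j) :=
  IsRelPrime.prod_right fun _ hi => hF (Finset.ne_of_mem_erase hi).symm

theorem exists_eq_prod_smul_add_sum (hF : Pairwise fun i j => IsRelPrime (F i) (F j))
    {α : κ → R} {g : ι → R} {w γ : ι → κ → R}
    (h : ∀ j, α = (g j * prodErase F j) • w j + F j • γ j) :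
    ∃ β : κ → R, α = (∏ i, F i) • β + ∑ j, (g j * prodErase F j) • w j := by
  have hdvd (t : κ) : ∏ i, F i ∣ (α - ∑ j, (g j * prodErase F j) • w j) t := by
    refine Fintype.prod_dvd_of_isRelPrime hF fun j => ?_
    have hsplit : α - ∑ i, (g i * prodErase F i) • w i =
        F j • γ j - (∑ i, (g i * prodErase F i) • w i - (g j * prodErase F j) • w j) := by
      rw [sub_sub_eq_add_sub, add_comm, ← h j]
    rw [hsplit]
    exact dvd_sub (Dvd.intro _ rfl) (dvd_sum_prodErase_smul_sub F g w j t)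
  choose β hβ using hdvd
  exact ⟨β, sub_eq_iff_eq_add.1 (funext hβ)⟩

end Prod

section Gradient

open Matrix

variable {m : ℕ}

theorem grad_prod (F : Fin m → S) : grad (∏ i, F i) = ∑ i, prodErase F i • grad (F i) := by
  have hleibniz (t : Fin 3) (s : Finset (Fin m)) :
      pderiv t (∏ i ∈ s, F i) = ∑ i ∈ s, (∏ j ∈ s.erase i, F j) * pderiv t (F i) := by
    induction s using Finset.induction_on with
    | empty => simp
    | insert a s ha ih =>
      rw [Finset.prod_insert ha, Derivation.leibniz, ih, Finset.sum_insert ha,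
        Finset.erase_insert ha, smul_eq_mul, smul_eq_mul, Finset.mul_sum, add_comm]
      refine congrArg _ (Finset.sum_congr rfl fun i hi => ?_)
      rw [Finset.erase_insert_of_ne (ne_of_mem_of_not_mem hi ha).symm,
        Finset.prod_insert (fun h => ha (Finset.mem_of_mem_erase h)), mul_assoc]
  ext1 t
  simpa only [grad, Finset.sum_apply, Pi.smul_apply, smul_eq_mul, prodErase] using
    hleibniz t Finset.univ

theorem grad_dotProduct_X {g : S} {n : ℕ} (hg : g.IsHomogeneous n) : grad g ⬝ᵥ X = n • g := by
  rw [dotProduct_comm]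
  exact hg.sum_X_mul_pderiv

theorem mem_D0_iff {f : S} {v : Fin 3 → S} : v ∈ D0 f ↔ v ⬝ᵥ grad f = 0 := Iff.rfl

theorem grad_cross_mem_D0 (f : S) (β : Fin 3 → S) : grad f ⨯₃ β ∈ D0 f := by
  rw [mem_D0_iff, dotProduct_comm, dot_self_cross]

theorem smul_rho (F : Fin m → S) (j : Fin m) : F j • rho F j = grad (∏ i, F i) ⨯₃ grad (F j) := by
  rw [grad_prod, LinearMap.map_sum₂, rho, Finset.smul_sum,
    ← Finset.add_sum_erase _ _ (Finset.mem_univ j), LinearMap.map_smul₂, cross_self, smul_zero,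
    zero_add]
  refine Finset.sum_congr rfl fun i hi => ?_
  rw [LinearMap.map_smul₂, smul_smul, Finset.erase_right_comm, prodErase,
    Finset.mul_prod_erase _ _ (Finset.mem_erase.2 ⟨(Finset.ne_of_mem_erase hi).symm,
      Finset.mem_univ j⟩)]

theorem rho_mem_D0 {F : Fin m → S} {j : Fin m} (hF : F j ≠ 0) : rho F j ∈ D0 (∏ i, F i) := by
  refine (smul_eq_zero.1 (?_ : F j • (rho F j ⬝ᵥ grad (∏ i, F i)) = 0)).resolve_left hF
  rw [← smul_dotProduct, smul_rho]
  exact grad_cross_mem_D0 _ _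

/-- The coefficient vector of the `1`-form `f (β + ∑ j, g_j df_j / f_j)`, where `f` is the product
of the `f_j`: the logarithmic form is multiplied by `f` to clear its poles. -/
noncomputable def logForm (F g : Fin m → S) (β : Fin 3 → S) : Fin 3 → S :=
  (∏ i, F i) • β + ∑ j, (g j * prodErase F j) • grad (F j)

theorem grad_cross_logForm (F g : Fin m → S) (β : Fin 3 → S) :
    grad (∏ i, F i) ⨯₃ logForm F g β =
      (∏ i, F i) • (∑ j, g j • rho F j + grad (∏ i, F i) ⨯₃ β) := by
  rw [logForm, map_add, map_smul, map_sum, smul_add, Finset.smul_sum, add_comm]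
  refine congrArg₂ _ (Finset.sum_congr rfl fun j _ => ?_) rfl
  rw [map_smul, ← smul_rho, ← mul_prodErase F j, smul_smul, smul_smul]
  ring_nf

theorem sum_rho {F : Fin m → S} (hF : ∀ j, F j ≠ 0) : ∑ j, rho F j = 0 := by
  have hgrad : logForm F 1 0 = grad (∏ i, F i) := by simp [logForm, grad_prod]
  have hcross := grad_cross_logForm F 1 0
  rw [hgrad, cross_self] at hcross
  have := (smul_eq_zero.1 hcross.symm).resolve_left (Finset.prod_ne_zero_iff.2 fun j _ => hF j)
  simpa using this

theorem dvd_logForm_dotProduct_X {F g : Fin m → S} {e : Fin m → ℕ}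
    (hF : ∀ j, (F j).IsHomogeneous (e j)) (β : Fin 3 → S) :
    ∏ i, F i ∣ logForm F g β ⬝ᵥ X := by
  rw [logForm, add_dotProduct, sum_dotProduct, smul_dotProduct]
  refine dvd_add (Dvd.intro _ rfl) (Finset.dvd_sum fun j _ => ?_)
  rw [smul_dotProduct, grad_dotProduct_X (hF j), ← mul_prodErase F j]
  exact ⟨g j * e j, by rw [nsmul_eq_mul, smul_eq_mul]; ring⟩

theorem exists_eq_smul_grad_of_cross_eq_zero {f : S} {d : ℕ} (hf : f.IsHomogeneous d)
    (hd : d ≠ 0) (hf0 : f ≠ 0) {w : Fin 3 → S} (hw : grad f ⨯₃ w = 0) (hX : f ∣ w ⬝ᵥ X) :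
    ∃ K : S, w = K • grad f := by
  obtain ⟨K, hK⟩ := hX
  have hfw : f • (d • w - K • grad f) = 0 := by
    have h := cross_cross_eq_smul_sub_smul' X (grad f) w
    rw [hw, map_zero, dotProduct_comm X w, hK, grad_dotProduct_X hf] at h
    rw [smul_sub, smul_comm f d, ← smul_assoc d, ← mul_smul, ← neg_sub, ← h, neg_zero]
  have hdw : d • w = K • grad f := sub_eq_zero.1 ((smul_eq_zero.1 hfw).resolve_left hf0)
  refine ⟨(d : ℂ)⁻¹ • K, ?_⟩
  rw [smul_assoc, ← hdw, ← Nat.cast_smul_eq_nsmul ℂ, inv_smul_smul₀ (Nat.cast_ne_zero.2 hd)]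

end Gradient

/-- The plane curves `F j = 0`, with `F j` homogeneous of degree `e j`, are smooth, cross
transversally, and no three of them meet in a point of the projective plane. Projective points are
represented by nonzero vectors of `ℂ³`. -/
structure IsNormalCrossing {m : ℕ} (F : Fin m → S) (e : Fin m → ℕ) : Prop where
  homogeneous : ∀ j, (F j).IsHomogeneous (e j)
  smooth : ∀ j, ∀ p : Fin 3 → ℂ, (∀ t, eval p (pderiv t (F j)) = 0) → p = 0
  transversal : ∀ i j : Fin m, i ≠ j → ∀ p : Fin 3 → ℂ, p ≠ 0 →
    eval p (F i) = 0 → eval p (F j) = 0 →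
    LinearIndependent ℂ
      ![fun t => eval p (pderiv t (F i)), fun t => eval p (pderiv t (F j))]
  no_triple_point : ∀ i j k : Fin m, i ≠ j → i ≠ k → j ≠ k → ∀ p : Fin 3 → ℂ, p ≠ 0 →
    ¬(eval p (F i) = 0 ∧ eval p (F j) = 0 ∧ eval p (F k) = 0)

namespace IsNormalCrossing

open Matrix

variable {m : ℕ} {F : Fin m → S} {e : Fin m → ℕ}

theorem ne_zero (H : IsNormalCrossing F e) (j : Fin m) : F j ≠ 0 := fun h =>
  one_ne_zero (H.smooth j 1 (by simp [h]))

theorem prod_ne_zero (H : IsNormalCrossing F e) : ∏ i, F i ≠ 0 :=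
  Finset.prod_ne_zero_iff.2 fun j _ => H.ne_zero j

theorem degree_ne_zero (H : IsNormalCrossing F e) (j : Fin m) : e j ≠ 0 := by
  intro hj
  have hC : F j = C (coeff 0 (F j)) := by
    have hhom := H.homogeneous j
    rw [hj] at hhom
    exact totalDegree_eq_zero_iff_eq_C.1 (Nat.le_zero.1 hhom.totalDegree_le)
  refine one_ne_zero (H.smooth j 1 fun t => ?_)
  rw [hC, pderiv_C, map_zero]

theorem sum_degree_ne_zero (H : IsNormalCrossing F e) (hm : 0 < m) : ∑ j, e j ≠ 0 := fun h =>
  H.degree_ne_zero ⟨0, hm⟩ (Finset.sum_eq_zero_iff.1 h _ (Finset.mem_univ _))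

theorem prod_homogeneous (H : IsNormalCrossing F e) : (∏ i, F i).IsHomogeneous (∑ i, e i) :=
  IsHomogeneous.prod _ _ _ fun j _ => H.homogeneous j

theorem noZeroOffOrigin_grad (H : IsNormalCrossing F e) (j : Fin m) :
    NoZeroOffOrigin (Set.range (grad (F j))) := fun p hp =>
  H.smooth j p fun t => hp _ ⟨t, rfl⟩

theorem isRelPrime (H : IsNormalCrossing F e) : Pairwise fun i j => IsRelPrime (F i) (F j) := by
  rintro i j hij g ⟨a, ha⟩ ⟨b, hb⟩
  refine NoZeroOffOrigin.isUnit fun p hp => ?_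
  have hg : eval p g = 0 := hp g rfl
  by_contra hp0
  have hLI := H.transversal i j hij p hp0 (by simp [ha, hg]) (by simp [hb, hg])
  have hgrad (q : S) (t : Fin 3) :
      eval p (pderiv t (g * q)) = eval p q * eval p (pderiv t g) := by
    simp [Derivation.leibniz, hg]
  have hab := LinearIndependent.pair_iff.1 hLI (eval p b) (-eval p a) <| by
    ext t
    simp only [ha, hb, hgrad, Pi.add_apply, Pi.smul_apply, smul_eq_mul, Pi.zero_apply]
    ring
  refine hp0 (H.smooth i p fun t => ?_)
  rw [ha, hgrad, neg_eq_zero.1 hab.2, zero_mul]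

theorem mem_span_pair_of_mul_mem (H : IsNormalCrossing F e) {i j l : Fin m} (hij : i ≠ j)
    (hil : i ≠ l) (hjl : j ≠ l) {w : S} (hw : w * F l ∈ Ideal.span {F i, F j}) :
    w ∈ Ideal.span {F i, F j} := by
  have hs : NoZeroOffOrigin {F i, F j, F l} := by
    intro p hp
    by_contra hp0
    exact H.no_triple_point i j l hij hil hjl p hp0 ⟨hp _ (by simp), hp _ (by simp), hp _ (by simp)⟩
  refine hs.mem_span_pair (by simp) (H.isRelPrime hij) (H.ne_zero i) ?_
  rintro _ (rfl | rfl | rfl)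
  · exact Ideal.mul_mem_left _ _ (Ideal.subset_span (by simp))
  · exact Ideal.mul_mem_left _ _ (Ideal.subset_span (by simp))
  · exact hw

theorem mem_span_pair_of_mul_cross_mem (H : IsNormalCrossing F e) {i j : Fin m} (hij : i ≠ j)
    {c : S} (hc : ∀ t, c * (grad (F i) ⨯₃ grad (F j)) t ∈ Ideal.span {F i, F j}) :
    c ∈ Ideal.span {F i, F j} := by
  have hs : NoZeroOffOrigin ({F i, F j} ∪ Set.range (grad (F i) ⨯₃ grad (F j))) := by
    intro p hp
    by_contra hp0
    refine crossProduct_ne_zero_iff_linearIndependent.2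
      (H.transversal i j hij p hp0 (hp _ (by simp)) (hp _ (by simp))) ?_
    have hcross (t : Fin 3) : eval p ((grad (F i) ⨯₃ grad (F j)) t) = 0 := hp _ (.inr ⟨t, rfl⟩)
    ext t
    rw [Pi.zero_apply, ← hcross t]
    fin_cases t <;> simp [cross_apply, grad]
  refine hs.mem_span_pair (by simp) (H.isRelPrime hij) (H.ne_zero i) ?_
  rintro _ ((rfl | rfl) | ⟨t, rfl⟩)
  · exact Ideal.mul_mem_left _ _ (Ideal.subset_span (by simp))
  · exact Ideal.mul_mem_left _ _ (Ideal.subset_span (by simp))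
  · exact hc t

end IsNormalCrossing

namespace IsNormalCrossing

open Matrix

variable {m : ℕ} {F : Fin m → S} {e : Fin m → ℕ}

theorem residue_mem_span_pair (H : IsNormalCrossing F e) {i j : Fin m} (hij : i ≠ j)
    {α γ γ' : Fin 3 → S} {c c' : S} (hi : α = c • grad (F i) + F i • γ)
    (hj : α = c' • grad (F j) + F j • γ') : c ∈ Ideal.span {F i, F j} := by
  refine H.mem_span_pair_of_mul_cross_mem hij fun t => ?_
  have hcross : c • (grad (F i) ⨯₃ grad (F j)) + F i • (γ ⨯₃ grad (F j)) =
      F j • (γ' ⨯₃ grad (F j)) := by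
    have h := congrArg (· ⨯₃ grad (F j)) (hi.symm.trans hj)
    simpa only [LinearMap.map_add₂, LinearMap.map_smul₂, cross_self, smul_zero, zero_add] using h
  have ht := congrFun hcross t
  simp only [Pi.add_apply, Pi.smul_apply, smul_eq_mul] at ht
  exact Ideal.mem_span_pair.2
    ⟨-(γ ⨯₃ grad (F j)) t, (γ' ⨯₃ grad (F j)) t, by linear_combination -ht⟩

theorem exists_eq_logForm (H : IsNormalCrossing F e) {α : Fin 3 → S}
    (hα : ∀ j, ∃ (c : S) (γ : Fin 3 → S), α = c • grad (F j) + F j • γ) :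
    ∃ (g : Fin m → S) (β : Fin 3 → S), α = logForm F g β := by
  choose c γ hcγ using hα
  have hc (j : Fin m) : c j ∈ Ideal.span {F j, prodErase F j} := by
    refine mem_span_pair_prod (fun i hi l hl hil w => ?_) fun i hi =>
      H.residue_mem_span_pair (Finset.ne_of_mem_erase hi).symm (hcγ j) (hcγ i)
    exact H.mem_span_pair_of_mul_mem (Finset.ne_of_mem_erase hi).symm
      (Finset.ne_of_mem_erase hl).symm hil
  choose u g hug using fun j => Ideal.mem_span_pair.1 (hc j)
  obtain ⟨β, hβ⟩ := exists_eq_prod_smul_add_sum H.isRelPrime (g := g)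
    (α := α) (w := fun j => grad (F j)) (γ := fun j => u j • grad (F j) + γ j) fun j => by
      conv_lhs => rw [hcγ j, ← hug j]
      module
  exact ⟨g, β, hβ⟩

theorem dvd_dotProduct_grad (H : IsNormalCrossing F e) {v : Fin 3 → S}
    (hv : v ∈ D0 (∏ i, F i)) (j : Fin m) : F j ∣ v ⬝ᵥ grad (F j) := by
  have hsum : ∑ i, prodErase F i * (v ⬝ᵥ grad (F i)) = 0 := by
    rw [← mem_D0_iff.1 hv, grad_prod, dotProduct_sum]
    simp only [dotProduct_smul, smul_eq_mul]
  rw [← Finset.add_sum_erase _ _ (Finset.mem_univ j)] at hsum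
  refine (isRelPrime_prodErase H.isRelPrime j).dvd_of_dvd_mul_left ?_
  rw [eq_neg_of_add_eq_zero_left hsum, dvd_neg]
  exact Finset.dvd_sum fun i hi =>
    (dvd_prodErase F (Finset.ne_of_mem_erase hi).symm).mul_right _

theorem exists_cross_X_eq_logForm (H : IsNormalCrossing F e) {v : Fin 3 → S}
    (hv : v ∈ D0 (∏ i, F i)) : ∃ (g : Fin m → S) (β : Fin 3 → S), v ⨯₃ X = logForm F g β := by
  refine H.exists_eq_logForm fun j => ?_
  obtain ⟨q, hq⟩ := H.dvd_dotProduct_grad hv j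
  refine (H.noZeroOffOrigin_grad j).exists_eq_smul_add_smul_of_cross_eq_smul (by simp)
    (H.ne_zero j) (β := q • X - e j • v) ?_
  rw [cross_cross_eq_smul_sub_smul, hq, dotProduct_comm X,
    grad_dotProduct_X (H.homogeneous j), smul_sub, smul_smul, smul_assoc, smul_comm (F j)]

theorem sum_degree_smul_mem (H : IsNormalCrossing F e) {v : Fin 3 → S}
    (hv : v ∈ D0 (∏ i, F i)) :
    (∑ j, e j) • v ∈ Submodule.span S (Set.range (rho F)) ⊔
      LinearMap.range (crossProduct (grad (∏ i, F i))) := by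
  obtain ⟨g, β, hlog⟩ := H.exists_cross_X_eq_logForm hv
  have hcross := grad_cross_logForm F g β
  rw [← hlog, cross_cross_eq_smul_sub_smul', mem_D0_iff.1 hv, zero_smul, sub_zero,
    grad_dotProduct_X H.prod_homogeneous, smul_assoc, smul_comm (∑ j, e j)] at hcross
  rw [smul_right_injective _ H.prod_ne_zero hcross]
  exact Submodule.add_mem_sup
    (Submodule.sum_mem _ fun j _ => Submodule.smul_mem _ _ (Submodule.subset_span ⟨j, rfl⟩))
    ⟨β, rfl⟩

theorem D0_eq_span_rho_sup_range_cross (H : IsNormalCrossing F e) (hm : 0 < m) :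
    D0 (∏ i, F i) = Submodule.span S (Set.range (rho F)) ⊔
      LinearMap.range (crossProduct (grad (∏ i, F i))) := by
  refine le_antisymm (fun v hv => ?_) (sup_le (Submodule.span_le.2 ?_) ?_)
  · have h := H.sum_degree_smul_mem hv
    rw [← Nat.cast_smul_eq_nsmul ℂ] at h
    exact (Submodule.smul_mem_iff _ (Nat.cast_ne_zero.2 (H.sum_degree_ne_zero hm))).1 h
  · rintro _ ⟨j, rfl⟩
    exact rho_mem_D0 (H.ne_zero j)
  · rintro _ ⟨β, rfl⟩
    exact grad_cross_mem_D0 _ β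

theorem exists_eq_add_mul_of_relation (H : IsNormalCrossing F e) (hm : 0 < m) {g : Fin m → S}
    {β : Fin 3 → S} (hrel : ∑ j, g j • rho F j + grad (∏ i, F i) ⨯₃ β = 0) :
    ∃ (K : S) (u : Fin m → S), (∀ j, g j = K + F j * u j) ∧ β = -∑ j, u j • grad (F j) := by
  obtain ⟨K, hK⟩ := exists_eq_smul_grad_of_cross_eq_zero H.prod_homogeneous
    (H.sum_degree_ne_zero hm) H.prod_ne_zero (w := logForm F g β)
    (by rw [grad_cross_logForm, hrel, smul_zero]) (dvd_logForm_dotProduct_X H.homogeneous β)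
  have hsum : ∑ j, ((g j - K) * prodErase F j) • grad (F j) = -((∏ i, F i) • β) := by
    rw [grad_prod, logForm] at hK
    simp only [sub_mul, sub_smul, Finset.sum_sub_distrib, mul_smul K, ← Finset.smul_sum, ← hK]
    abel
  have hdvd (j : Fin m) : F j ∣ g j - K := by
    refine (H.noZeroOffOrigin_grad j).dvd_of_forall_dvd_mul (Set.forall_mem_range.2 fun t => ?_)
    refine (isRelPrime_prodErase H.isRelPrime j).dvd_of_dvd_mul_right ?_
    have h := dvd_sum_prodErase_smul_sub F (fun i => g i - K) (fun i => grad (F i)) j t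
    rw [hsum, ← mul_prodErase F j, Pi.sub_apply] at h
    have hβ : F j ∣ (-((F j * prodErase F j) • β)) t :=
      ((Dvd.intro _ rfl : F j ∣ F j * prodErase F j).mul_right (β t)).neg_right
    have hj := (dvd_sub_right hβ).1 h
    rwa [Pi.smul_apply, smul_eq_mul, mul_right_comm] at hj
  choose u hu using hdvd
  refine ⟨K, u, fun j => eq_add_of_sub_eq' (hu j), smul_right_injective _ H.prod_ne_zero ?_⟩
  change (∏ i, F i) • β = (∏ i, F i) • -∑ j, u j • grad (F j)
  rw [smul_neg, ← neg_eq_iff_eq_neg, ← hsum, Finset.smul_sum]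
  refine Finset.sum_congr rfl fun j _ => ?_
  rw [hu, mul_right_comm, mul_prodErase, mul_smul]

theorem constantCoeff_eq_zero (H : IsNormalCrossing F e) (j : Fin m) :
    constantCoeff (F j) = 0 :=
  (H.homogeneous j).coeff_eq_zero (by simpa using (H.degree_ne_zero j).symm)

theorem constantCoeff_eq_zero_of_relation (H : IsNormalCrossing F e) {g : Fin m → S}
    {β : Fin 3 → S} (hrel : ∑ j, g j • rho F j + grad (∏ i, F i) ⨯₃ β = 0)
    {l : Fin m} (hl : g l = 0) {t : Fin 3} (ht : ∀ j, constantCoeff (pderiv t (F j)) = 0) :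
    (∀ j, constantCoeff (g j) = 0) ∧ constantCoeff (β t) = 0 := by
  obtain ⟨K, u, hg, rfl⟩ := H.exists_eq_add_mul_of_relation l.pos hrel
  have hgK (j : Fin m) : constantCoeff (g j) = constantCoeff K := by
    simp [hg j, H.constantCoeff_eq_zero]
  refine ⟨fun j => ?_, by simp [grad, ht]⟩
  rw [hgK, ← hgK l, hl, map_zero]

end IsNormalCrossing

section MinimalGenerators

variable {R M k ι : Type*} [CommRing R] [AddCommGroup M] [Module R M] [CommRing k] [Nontrivial k]
  [Fintype ι] {ε : R →+* k} {G : ι → M}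

theorem notMem_span_image_compl_singleton
    (hG : ∀ s : ι → R, ∑ i, s i • G i = 0 → ∀ i, ε (s i) = 0) (i : ι) :
    G i ∉ Submodule.span R (G '' {i}ᶜ) := by
  intro hi
  obtain ⟨s, hs, hsG⟩ := (Finsupp.mem_span_image_iff_linearCombination R).1 hi
  classical
  have hsi : s i = 0 := by
    by_contra h
    exact hs (Finsupp.mem_support_iff.2 h) rfl
  have hrel : ∑ j, ((Pi.single i 1 : ι → R) j - s j) • G j = 0 := by
    rw [Finsupp.linearCombination_apply, Finsupp.sum_fintype _ _ (by simp)] at hsG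
    simp [sub_smul, hsG, Pi.single_apply]
  simpa [hsi] using hG _ hrel i

theorem card_le_card_of_span_eq
    (hG : ∀ s : ι → R, ∑ i, s i • G i = 0 → ∀ i, ε (s i) = 0) {T : Finset M}
    (hT : Submodule.span R (T : Set M) = Submodule.span R (Set.range G)) :
    Fintype.card ι ≤ T.card := by
  classical
  have hGT (i : ι) : ∃ a : T → R, ∑ t, a t • (t : M) = G i := by
    rw [← Submodule.mem_span_range_iff_exists_fun, Subtype.range_coe_subtype]
    exact hT ▸ Submodule.subset_span ⟨i, rfl⟩
  have hTG (t : T) : ∃ b : ι → R, ∑ i, b i • G i = t :=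
    (Submodule.mem_span_range_iff_exists_fun R).1 (hT ▸ Submodule.subset_span t.2)
  choose A hA using hGT
  choose B hB using hTG
  have hAB : (Matrix.of A).map ε * (Matrix.of B).map ε = 1 := by
    have hrel (i : ι) :
        ∑ j, ((Matrix.of A * Matrix.of B) i j - (1 : Matrix ι ι R) i j) • G j = 0 := by
      simp only [sub_smul, Finset.sum_sub_distrib, Matrix.mul_apply, Matrix.of_apply,
        Finset.sum_smul, mul_smul]
      rw [Finset.sum_comm]
      simp only [← Finset.smul_sum, hB, hA]
      simp [Matrix.one_apply]
    rw [← Matrix.map_mul, ← Matrix.map_one ε (map_zero ε) (map_one ε)]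
    ext i j
    have h := hG _ (hrel i) j
    rwa [map_sub, sub_eq_zero] at h
  calc
    Fintype.card ι = ((Matrix.of A).map ε * (Matrix.of B).map ε).rank := by
      rw [hAB, Matrix.rank_one]
    _ ≤ ((Matrix.of A).map ε).rank := Matrix.rank_mul_le_left _ _
    _ ≤ Fintype.card T := Matrix.rank_le_card_width _
    _ = T.card := Fintype.card_coe T

end MinimalGenerators

section TwoLines

open Matrix

theorem grad_X (t : Fin 3) : grad (X t) = Pi.single t 1 := by
  ext1 i
  rw [grad, pderiv_X, Pi.single_comm]

theorem grad_cross_grad_X_two (f : S) : grad f ⨯₃ grad (X 2) = sigz f := by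
  rw [grad_X]
  ext1 t
  fin_cases t <;> simp [cross_apply, grad, sigz]

variable {n : ℕ} {F : Fin (n + 1) → S} {e : Fin (n + 1) → ℕ}

theorem rho_mem_span_G2 (hF : ∀ j, F j ≠ 0) (j : Fin (n + 1)) :
    rho F j ∈ Submodule.span S (Set.range (G2 F)) := by
  have hcastSucc (i : Fin n) : rho F i.castSucc ∈ Submodule.span S (Set.range (G2 F)) :=
    Submodule.subset_span ⟨.inl i, rfl⟩
  refine Fin.lastCases ?_ hcastSucc j
  have hsum := sum_rho hF
  rw [Fin.sum_univ_castSucc] at hsum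
  rw [eq_neg_of_add_eq_zero_right hsum]
  exact Submodule.neg_mem _ (Submodule.sum_mem _ fun i _ => hcastSucc i)

theorem range_cross_le_span_G2 (hF : ∀ j, F j ≠ 0) {i j : Fin (n + 1)} (hi : F i = X 0)
    (hj : F j = X 1) :
    LinearMap.range (crossProduct (grad (∏ l, F l))) ≤ Submodule.span S (Set.range (G2 F)) := by
  have hX (t : Fin 3) :
      grad (∏ l, F l) ⨯₃ grad (X t) ∈ Submodule.span S (Set.range (G2 F)) := by
    fin_cases t
    · change grad (∏ l, F l) ⨯₃ grad (X 0) ∈ _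
      rw [← hi, ← smul_rho]
      exact Submodule.smul_mem _ _ (rho_mem_span_G2 hF i)
    · change grad (∏ l, F l) ⨯₃ grad (X 1) ∈ _
      rw [← hj, ← smul_rho]
      exact Submodule.smul_mem _ _ (rho_mem_span_G2 hF j)
    · exact Submodule.subset_span ⟨.inr 0, (grad_cross_grad_X_two _).symm⟩
  rintro _ ⟨β, rfl⟩
  have hβ : β = ∑ t, β t • grad (X t) := by
    simp only [grad_X]
    exact pi_eq_sum_univ' β
  rw [hβ, map_sum]
  exact Submodule.sum_mem _ fun t _ => by
    rw [map_smul]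
    exact Submodule.smul_mem _ _ (hX t)

theorem IsNormalCrossing.D0_eq_span_G2 (H : IsNormalCrossing F e) {i j : Fin (n + 1)}
    (hi : F i = X 0) (hj : F j = X 1) :
    D0 (∏ l, F l) = Submodule.span S (Set.range (G2 F)) := by
  refine le_antisymm ?_ (Submodule.span_le.2 ?_)
  · rw [H.D0_eq_span_rho_sup_range_cross n.succ_pos]
    refine sup_le (Submodule.span_le.2 ?_) (range_cross_le_span_G2 H.ne_zero hi hj)
    exact Set.range_subset_iff.2 (rho_mem_span_G2 H.ne_zero)
  · rintro _ ⟨l | l, rfl⟩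
    · exact rho_mem_D0 (H.ne_zero _)
    · obtain rfl := Subsingleton.elim l 0
      change sigz _ ∈ _
      rw [← grad_cross_grad_X_two]
      exact grad_cross_mem_D0 _ _

theorem IsNormalCrossing.constantCoeff_eq_zero_of_G2_relation (H : IsNormalCrossing F e)
    (hF : ∀ j, constantCoeff (pderiv 2 (F j)) = 0) (s : Fin n ⊕ Fin 1 → S)
    (hs : ∑ i, s i • G2 F i = 0) (i : Fin n ⊕ Fin 1) : constantCoeff (s i) = 0 := by
  let g : Fin (n + 1) → S := Fin.snoc (α := fun _ => S) (fun j => s (.inl j)) 0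
  have hrel : ∑ j, g j • rho F j + grad (∏ j, F j) ⨯₃ (s (.inr 0) • grad (X 2)) = 0 := by
    rw [← hs, Fintype.sum_sum_type, Fin.sum_univ_one, Fin.sum_univ_castSucc, map_smul,
      grad_cross_grad_X_two]
    simp only [g, Fin.snoc_castSucc, Fin.snoc_last, zero_smul, add_zero]
    rfl
  obtain ⟨hg, hβ⟩ := H.constantCoeff_eq_zero_of_relation hrel (l := Fin.last n)
    (Fin.snoc_last ..) hF
  rcases i with j | j
  · simpa only [g, Fin.snoc_castSucc] using hg j.castSucc
  · obtain rfl := Subsingleton.elim j 0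
    simpa [grad_X] using hβ

end TwoLines

theorem caseL2_minimal_generators_general
    {m : ℕ} (hm : 2 ≤ m) {F : Fin m → S} {e : Fin m → ℕ} (H : IsNormalCrossing F e)
    (hF1 : F ⟨0, by lia⟩ = X 0) (hF2 : F ⟨1, by lia⟩ = X 1)
    (hl2 : ∀ j : Fin m, 2 ≤ (j : ℕ) → 2 ≤ e j) :
    D0 (∏ i, F i) = Submodule.span S (Set.range (G2 F)) ∧
    (∀ i : Fin (m - 1) ⊕ Fin 1, G2 F i ∉ Submodule.span S (G2 F '' {i}ᶜ)) ∧
    (∀ T : Finset (Fin 3 → S),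
      Submodule.span S (T : Set (Fin 3 → S)) = D0 (∏ i, F i) → m ≤ T.card) := by
  obtain ⟨n, rfl⟩ : ∃ n, m = n + 1 := ⟨m - 1, by lia⟩
  have hz (j : Fin (n + 1)) : constantCoeff (pderiv 2 (F j)) = 0 := by
    obtain hj | hj | hj : j = ⟨0, by lia⟩ ∨ j = ⟨1, by lia⟩ ∨ 2 ≤ (j : ℕ) := by
      simp only [Fin.ext_iff]; lia
    · rw [hj, hF1]; simp [pderiv_X]
    · rw [hj, hF2]; simp [pderiv_X]
    · have hej := hl2 j hj
      exact (H.homogeneous j).pderiv.coeff_eq_zero (by rw [map_zero]; lia)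
  have hgen := H.D0_eq_span_G2 hF1 hF2
  have hrel := H.constantCoeff_eq_zero_of_G2_relation hz
  refine ⟨hgen, notMem_span_image_compl_singleton hrel, fun T hT => ?_⟩
  simpa using card_le_card_of_span_eq hrel (hT.trans hgen)

/-- if `ℓ(C) = 2` with `f_1 = x`, `f_2 = y` (so `e_1 = e_2 = 1` and `e_j ≥ 2`
for `j ≥ 3`), then `D₀(f)` is generated by `G = {ρ_1, …, ρ_{m−1}, σ^z}`, this generating
set is minimal, and every generating set of `D₀(f)` has at least `m` elements, so `C` is an
`m`-syzygy curve with exponents `d_1 = ⋯ = d_{m−1} = d−2`, `d_m = d−1`. -/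
theorem caseL2_minimal_generators
    (m : ℕ) (hm : 4 ≤ m) (F : Fin m → S) (e : Fin m → ℕ)
    (he : ∀ j, 1 ≤ e j)
    (hhom : ∀ j, (F j).IsHomogeneous (e j))
    (hsmooth : ∀ j, ∀ p : Fin 3 → ℂ,
      (∀ t, eval p (pderiv t (F j)) = 0) → p = 0)
    (hnc : ∀ i j : Fin m, i ≠ j → ∀ p : Fin 3 → ℂ, p ≠ 0 →
      eval p (F i) = 0 → eval p (F j) = 0 →
      LinearIndependent ℂ
        ![fun t => eval p (pderiv t (F i)), fun t => eval p (pderiv t (F j))])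
    (htriple : ∀ i j k : Fin m, i ≠ j → i ≠ k → j ≠ k → ∀ p : Fin 3 → ℂ, p ≠ 0 →
      ¬(eval p (F i) = 0 ∧ eval p (F j) = 0 ∧ eval p (F k) = 0))
    (hF1 : F ⟨0, by omega⟩ = X 0) (hF2 : F ⟨1, by omega⟩ = X 1)
    (he1 : e ⟨0, by omega⟩ = 1) (he2 : e ⟨1, by omega⟩ = 1)
    (hl2 : ∀ j : Fin m, 2 ≤ (j : ℕ) → 2 ≤ e j) :
    D0 (∏ i, F i) = Submodule.span S (Set.range (G2 F)) ∧
    (∀ i : Fin (m - 1) ⊕ Fin 1, G2 F i ∉ Submodule.span S (G2 F '' {i}ᶜ)) ∧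
    (∀ T : Finset (Fin 3 → S),
      Submodule.span S (T : Set (Fin 3 → S)) = D0 (∏ i, F i) → m ≤ T.card) := by
  exact caseL2_minimal_generators_general (by lia) ⟨hhom, hsmooth, hnc, htriple⟩ hF1 hF2 hl2
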